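/- Assume N ≥ 3, and let S be an arbitrary invertible 2×2 complex matrix, with ξ₁,…,ξ_N defined via S as in the context. Then (i) an element ω ∈ Ω satisfies dω = 0 if and only if ω ∼ a + Σ_α ξ₁^α a_α for some polynomials a, a₁, a₂ ∈ ℂ[ψ₂,…,ψ_N, χ₂,…,χ_N]; and (ii) such a combination is ∼ 0 if and only if a = ½ Σ_{i=2}^{N} Σ_{j=2}^{N} (ξᵢ·ξⱼ)² d and Σ_α ξ₁^α a_α = Σ_{i=2}^{N} (ξ₁·ξᵢ)(ξᵢ¹d₁ + ξᵢ²d₂) for some polynomials d, d₁, d₂ ∈ ℂ[ψ₂,…,ψ_N, χ₂,…,χ_N]. -/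

import Mathlib

/-!
D = 3 supersymmetry algebra cohomology.
`R3 N = ℂ[ψ₁,…,ψ_N, χ₁,…,χ_N]`, `Om3 N` is the free module with basis
`{1, c̃₁, c̃₂, c̃₃, c̃₁c̃₂, c̃₁c̃₃, c̃₂c̃₃, c̃₁c̃₂c̃₃}` (components 0,…,7), and
`d3` is the odd superderivation with `dc̃₁ = P`, `dc̃₂ = Q`, `dc̃₃ = S`, `d|_R = 0`.
-/

open MvPolynomial

noncomputable section

/-- The polynomial ring `ℂ[ψ₁,…,ψ_N, χ₁,…,χ_N]`; `Sum.inl i ↦ ψᵢ`, `Sum.inr i ↦ χᵢ`. -/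
abbrev R3 (N : ℕ) : Type := MvPolynomial (Fin N ⊕ Fin N) ℂ

/-- `Ω`: free `R3`-module with basis
`{1, c̃₁, c̃₂, c̃₃, c̃₁c̃₂, c̃₁c̃₃, c̃₂c̃₃, c̃₁c̃₂c̃₃}` (components 0,…,7). -/
abbrev Om3 (N : ℕ) : Type := Fin 8 → R3 N

/-- The ghost `ψᵢ`. -/
def ψ {N : ℕ} (i : Fin N) : R3 N := X (Sum.inl i)

/-- The ghost `χᵢ`. -/
def χ {N : ℕ} (i : Fin N) : R3 N := X (Sum.inr i)

/-- `P = Σ ψᵢ²`. -/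
def PP (N : ℕ) : R3 N := ∑ i, ψ i ^ 2

/-- `Q = Σ χᵢ²`. -/
def QQ (N : ℕ) : R3 N := ∑ i, χ i ^ 2

/-- `S = Σ ψᵢχᵢ`. -/
def SS (N : ℕ) : R3 N := ∑ i, ψ i * χ i

/-- The differential: the unique R-linear odd superderivation with
`dc̃₁ = P`, `dc̃₂ = Q`, `dc̃₃ = S` and `d|_R = 0`, written out in components:
`d(ω₀ + c̃₁ω₁ + c̃₂ω₂ + c̃₃ω₃ + c̃₁c̃₂ω₄ + c̃₁c̃₃ω₅ + c̃₂c̃₃ω₆ + c̃₁c̃₂c̃₃ω₇)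
 = Pω₁ + Qω₂ + Sω₃ + (Pc̃₂ − Qc̃₁)ω₄ + (Pc̃₃ − Sc̃₁)ω₅ + (Qc̃₃ − Sc̃₂)ω₆
   + (Pc̃₂c̃₃ − Qc̃₁c̃₃ + Sc̃₁c̃₂)ω₇`. -/
def d3 {N : ℕ} (ω : Om3 N) : Om3 N :=
  ![PP N * ω 1 + QQ N * ω 2 + SS N * ω 3,
    -(QQ N * ω 4) - SS N * ω 5,
    PP N * ω 4 - SS N * ω 6,
    PP N * ω 5 + QQ N * ω 6,
    SS N * ω 7,
    -(QQ N * ω 7),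
    PP N * ω 7,
    0]

/-- Embedding of `R` into `Ω` (coefficient of the basis element `1`). -/
def ofR3 {N : ℕ} (r : R3 N) : Om3 N := ![r, 0, 0, 0, 0, 0, 0, 0]

/-- `ω ∼ ω'` iff `ω − ω' = dρ` for some `ρ`. -/
def Equiv3 {N : ℕ} (ω ω' : Om3 N) : Prop := ∃ ρ, ω - ω' = d3 ρ

/-- The invariant `ξᵢ·ξⱼ = ψᵢχⱼ − χᵢψⱼ`. -/
def xidot {N : ℕ} (i j : Fin N) : R3 N := ψ i * χ j - χ i * ψ j

/-- `Θᵢⱼ = i(c̃₃(ψᵢχⱼ + ψⱼχᵢ) − c̃₁χᵢχⱼ − c̃₂ψᵢψⱼ)` as an element of `Ω`. -/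
def Theta {N : ℕ} (i j : Fin N) : Om3 N :=
  ![0,
    -(C Complex.I * (χ i * χ j)),
    -(C Complex.I * (ψ i * ψ j)),
    C Complex.I * (ψ i * χ j + ψ j * χ i),
    0, 0, 0, 0]

/-- The supersymmetry ghost `ξᵢ = (ψᵢ, iχᵢ)·S⁻¹` (row spinor, entries in `R`). -/
def xi3 {N : ℕ} (S : Matrix (Fin 2) (Fin 2) ℂ) (i : Fin N) (α : Fin 2) : R3 N :=
  C (S⁻¹ 0 α) * ψ i + C (Complex.I * S⁻¹ 1 α) * χ i

/-- `ϑᵢ = (i(c̃₃ψᵢ − c̃₁χᵢ), c̃₃χᵢ − c̃₂ψᵢ)·S⁻¹` (row spinor, entries in `Ω`). -/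
def theta3 {N : ℕ} (S : Matrix (Fin 2) (Fin 2) ℂ) (i : Fin N) (α : Fin 2) : Om3 N :=
  ![0,
    -(C (Complex.I * S⁻¹ 0 α) * χ i),
    -(C (S⁻¹ 1 α) * ψ i),
    C (Complex.I * S⁻¹ 0 α) * ψ i + C (S⁻¹ 1 α) * χ i,
    0, 0, 0, 0]

/-- The subring `ℂ[ψ₂,…,ψ_N, χ₂,…,χ_N]` of `R3 N`. -/
def coefRing3 (N : ℕ) (hN : 0 < N) : Subalgebra ℂ (R3 N) :=
  MvPolynomial.supported ℂ
    {v : Fin N ⊕ Fin N | v ≠ Sum.inl ⟨0, hN⟩ ∧ v ≠ Sum.inr ⟨0, hN⟩}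

/-!
Fix one index and let `x`, `y` be its two ghosts and `A` the ring of polynomials in all the others,
so that `P = x² + p`, `Q = y² + q`, `S = xy + s` with `p, q, s ∈ A`. The quotient `R / (P, Q)` is
`A`-free on `1, x, y, xy`, and multiplication by `S` is an explicit `4 × 4` matrix. Its cokernel
`R / (P, Q, S)` has one representative `a + bx + cy` for each class of `(a, b, c)` modulo the
relations `(pq - s²)d`, `(s d₁ + q d₂, -(p d₁ + s d₂))`. Its kernel vanishes because
`pq - s² = ½ Σ (ξᵢ·ξⱼ)²` is nonzero as soon as two further indices exist. Hence `P, Q, S` is a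
regular sequence, the Koszul complex `Ω` is exact in positive degree, and its cohomology is
`R / (P, Q, S)`.
-/

open RingTheory.Sequence
open scoped Polynomial.Bivariate
open Polynomial (CC)

section Univariate

variable {A : Type*} [CommRing A] {p : A}

lemma monic_sq_add_C (p : A) : (Polynomial.X ^ 2 + Polynomial.C p).Monic :=
  Polynomial.monic_X_pow_add_C p two_ne_zero

lemma exists_eq_sq_add_C_mul_add_linear (p : A) (f : Polynomial A) :
    ∃ (g : Polynomial A) (a b : A), f = (Polynomial.X ^ 2 + Polynomial.C p) * g +
      (Polynomial.C a + Polynomial.C b * Polynomial.X) := by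
  nontriviality A
  have hdeg : (f %ₘ (Polynomial.X ^ 2 + Polynomial.C p)).natDegree ≤ 1 := by
    have := Polynomial.natDegree_modByMonic_lt f (monic_sq_add_C p)
      (fun h => by simpa [h] using Polynomial.natDegree_X_pow_add_C (n := 2) (r := p))
    rw [Polynomial.natDegree_X_pow_add_C] at this
    omega
  obtain ⟨b, a, hba⟩ := Polynomial.exists_eq_X_add_C_of_natDegree_le_one hdeg
  exact ⟨f /ₘ (Polynomial.X ^ 2 + Polynomial.C p), a, b, by
    rw [add_comm (Polynomial.C a), ← hba, add_comm, Polynomial.modByMonic_add_div]⟩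

lemma eq_zero_of_sq_add_C_dvd_linear {a b : A}
    (h : Polynomial.X ^ 2 + Polynomial.C p ∣ Polynomial.C a + Polynomial.C b * Polynomial.X) :
    a = 0 ∧ b = 0 := by
  nontriviality A
  have hzero : Polynomial.C a + Polynomial.C b * Polynomial.X = 0 := by
    by_contra hne
    refine (monic_sq_add_C p).not_dvd_of_degree_lt hne ?_ h
    rw [Polynomial.degree_X_pow_add_C two_pos, add_comm]
    exact Polynomial.degree_linear_lt
  exact ⟨by simpa using congrArg (Polynomial.coeff · 0) hzero,
    by simpa using congrArg (Polynomial.coeff · 1) hzero⟩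

lemma dvd_of_linear_mem_span {a b g : A}
    (h : Polynomial.C a + Polynomial.C b * Polynomial.X ∈
      Ideal.span {Polynomial.X ^ 2 + Polynomial.C p, Polynomial.C g}) : g ∣ a ∧ g ∣ b := by
  obtain ⟨u, v, huv⟩ := Ideal.mem_span_pair.mp h
  obtain ⟨w, a', b', rfl⟩ := exists_eq_sq_add_C_mul_add_linear p v
  obtain ⟨ha, hb⟩ : a - g * a' = 0 ∧ b - g * b' = 0 :=
    eq_zero_of_sq_add_C_dvd_linear (p := p) ⟨u + Polynomial.C g * w, by
      simp only [map_sub, map_mul]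
      linear_combination -huv⟩
  exact ⟨⟨a', sub_eq_zero.mp ha⟩, ⟨b', sub_eq_zero.mp hb⟩⟩

lemma mem_span_sq_add_C_of_C_mul_mem {g : A} (hg : g ∈ nonZeroDivisors A) {v : Polynomial A}
    (h : Polynomial.C g * v ∈ Ideal.span {Polynomial.X ^ 2 + Polynomial.C p}) :
    v ∈ Ideal.span {Polynomial.X ^ 2 + Polynomial.C p} := by
  simp only [Ideal.mem_span_singleton] at h ⊢
  obtain ⟨w, a, b, rfl⟩ := exists_eq_sq_add_C_mul_add_linear p v
  obtain ⟨ha, hb⟩ : g * a = 0 ∧ g * b = 0 :=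
    eq_zero_of_sq_add_C_dvd_linear (p := p) <| by
      convert h.sub (dvd_mul_right _ (Polynomial.C g * w)) using 1
      simp only [map_mul]
      ring
  rw [mul_left_mem_nonZeroDivisors_eq_zero_iff hg] at ha hb
  simp [ha, hb]

end Univariate

section Koszul

variable {R : Type*} [CommRing R] {a b c : R}

lemma isWeaklyRegular_triple_iff (a b c : R) :
    IsWeaklyRegular R [a, b, c] ↔ IsSMulRegular R a ∧
      (∀ v, b * v ∈ Ideal.span {a} → v ∈ Ideal.span {a}) ∧
      ∀ w, c * w ∈ Ideal.span {a, b} → w ∈ Ideal.span {a, b} := by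
  simp only [isWeaklyRegular_iff_Fin, List.length_cons, List.length_nil, Fin.forall_fin_succ,
    isSMulRegular_quotient_iff_mem_of_smul_mem]
  simp [isSMulRegular_iff_right_eq_zero_of_smul, Ideal.span_insert]

lemma exists_eq_of_mul_add_mul_eq_zero (ha : IsSMulRegular R a)
    (hb : ∀ v, b * v ∈ Ideal.span {a} → v ∈ Ideal.span {a}) {u v : R}
    (h : a * u + b * v = 0) : ∃ w, u = b * w ∧ v = -(a * w) := by
  obtain ⟨w, rfl⟩ := Ideal.mem_span_singleton.mp <| hb v <|
    Ideal.mem_span_singleton.mpr ⟨-u, by linear_combination h⟩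
  refine ⟨-w, ha ?_, by ring⟩
  simp only [smul_eq_mul]
  linear_combination h

lemma exists_eq_of_isWeaklyRegular_of_add_eq_zero (h : IsWeaklyRegular R [a, b, c]) {u v w : R}
    (huvw : a * u + b * v + c * w = 0) :
    ∃ r s t, u = -(b * r) - c * s ∧ v = a * r - c * t ∧ w = a * s + b * t := by
  obtain ⟨ha, hb, hc⟩ := (isWeaklyRegular_triple_iff a b c).mp h
  obtain ⟨s, t, rfl⟩ := Ideal.mem_span_pair.mp <| hc w <|
    Ideal.mem_span_pair.mpr ⟨-u, -v, by linear_combination -huvw⟩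
  obtain ⟨r, hu, hv⟩ := exists_eq_of_mul_add_mul_eq_zero ha hb
    (u := u + c * s) (v := v + c * t) (by linear_combination huvw)
  exact ⟨-r, s, t, by linear_combination hu, by linear_combination hv, by ring⟩

end Koszul

section Bivariate

variable {A : Type*} [CommRing A] {p q s : A}

/-- The quadric `x² + p` over `A`, which models `P`. Throughout, `x` is the outer variable `Y` of
`A[X][Y]` and `y` the inner variable `X`. -/
def sqOuter (p : A) : A[X][Y] := Y ^ 2 + CC p

/-- The quadric `y² + q` over `A`, which models `Q`. -/
def sqInner (q : A) : A[X][Y] := Polynomial.C (Polynomial.X ^ 2 + Polynomial.C q)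

/-- The quadric `xy + s` over `A`, which models `S`. -/
def crossTerm (s : A) : A[X][Y] := Y * Polynomial.C Polynomial.X + CC s

/-- The polynomial `c₀ + c₁x + c₂y + c₃xy`, the normal form modulo `x² + p` and `y² + q`. -/
def biaffine (c₀ c₁ c₂ c₃ : A) : A[X][Y] :=
  Polynomial.C (Polynomial.C c₀ + Polynomial.C c₂ * Polynomial.X) +
  Polynomial.C (Polynomial.C c₁ + Polynomial.C c₃ * Polynomial.X) * Y

lemma exists_sub_biaffine_mem_span (p q : A) (f : A[X][Y]) : ∃ c₀ c₁ c₂ c₃ : A,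
    f - biaffine c₀ c₁ c₂ c₃ ∈ Ideal.span {sqOuter p, sqInner q} := by
  obtain ⟨g, a, b, rfl⟩ := exists_eq_sq_add_C_mul_add_linear (Polynomial.C p) f
  obtain ⟨u, c₀, c₂, rfl⟩ := exists_eq_sq_add_C_mul_add_linear q a
  obtain ⟨v, c₁, c₃, rfl⟩ := exists_eq_sq_add_C_mul_add_linear q b
  refine ⟨c₀, c₁, c₂, c₃, Ideal.mem_span_pair.mpr ⟨g, Polynomial.C u + Polynomial.C v * Y, ?_⟩⟩
  simp only [sqOuter, sqInner, biaffine, map_add, map_mul]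
  ring

lemma eq_zero_of_biaffine_mem_span {c₀ c₁ c₂ c₃ : A}
    (h : biaffine c₀ c₁ c₂ c₃ ∈ Ideal.span {sqOuter p, sqInner q}) :
    c₀ = 0 ∧ c₁ = 0 ∧ c₂ = 0 ∧ c₃ = 0 := by
  obtain ⟨h₀₂, h₁₃⟩ := dvd_of_linear_mem_span h
  obtain ⟨h₀, h₂⟩ := eq_zero_of_sq_add_C_dvd_linear h₀₂
  obtain ⟨h₁, h₃⟩ := eq_zero_of_sq_add_C_dvd_linear h₁₃
  exact ⟨h₀, h₁, h₂, h₃⟩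

lemma crossTerm_mul_biaffine_sub_mem_span (p q s c₀ c₁ c₂ c₃ : A) :
    crossTerm s * biaffine c₀ c₁ c₂ c₃ -
        biaffine (s * c₀ + p * q * c₃) (s * c₁ - q * c₂) (s * c₂ - p * c₁) (c₀ + s * c₃) ∈
      Ideal.span {sqOuter p, sqInner q} := by
  refine Ideal.mem_span_pair.mpr
    ⟨CC c₁ * Polynomial.C Polynomial.X + CC c₃ * Polynomial.C Polynomial.X ^ 2,
      CC c₂ * Y - CC p * CC c₃, ?_⟩
  simp only [sqOuter, sqInner, crossTerm, biaffine, map_add, map_sub, map_mul, map_pow]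
  ring

lemma exists_eq_of_biaffine_sub_crossTerm_mul_mem_span {a b c : A} {w : A[X][Y]}
    (h : biaffine a b c 0 - crossTerm s * w ∈ Ideal.span {sqOuter p, sqInner q}) :
    ∃ d d₁ d₂ : A, w - biaffine (-(s * d)) d₁ (-d₂) d ∈ Ideal.span {sqOuter p, sqInner q} ∧
      a = (p * q - s ^ 2) * d ∧ b = s * d₁ + q * d₂ ∧ c = -(p * d₁ + s * d₂) := by
  obtain ⟨c₀, c₁, c₂, c₃, hw⟩ := exists_sub_biaffine_mem_span p q w
  obtain ⟨h₀, h₁, h₂, h₃⟩ : a - (s * c₀ + p * q * c₃) = 0 ∧ b - (s * c₁ - q * c₂) = 0 ∧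
      c - (s * c₂ - p * c₁) = 0 ∧ -(c₀ + s * c₃) = 0 := by
    refine eq_zero_of_biaffine_mem_span (p := p) (q := q) ?_
    convert add_mem (add_mem h (Ideal.mul_mem_left _ (crossTerm s) hw))
      (crossTerm_mul_biaffine_sub_mem_span p q s c₀ c₁ c₂ c₃) using 1
    simp only [biaffine, map_add, map_sub, map_mul, map_neg, map_zero]
    ring
  obtain rfl : c₀ = -(s * c₃) := by linear_combination -h₃
  refine ⟨c₃, c₁, -c₂, by rwa [neg_neg], ?_, ?_, ?_⟩
  · linear_combination h₀
  · linear_combination h₁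
  · linear_combination h₂

lemma exists_sub_affine_mem_span (p q s : A) (f : A[X][Y]) : ∃ a b c : A,
    f - biaffine a b c 0 ∈ Ideal.span {sqOuter p, sqInner q, crossTerm s} := by
  obtain ⟨c₀, c₁, c₂, c₃, hf⟩ := exists_sub_biaffine_mem_span p q f
  obtain ⟨u, v, huv⟩ := Ideal.mem_span_pair.mp hf
  refine ⟨c₀ - s * c₃, c₁, c₂, Submodule.mem_span_triple.mpr ⟨u, v, CC c₃, ?_⟩⟩
  simp only [biaffine, crossTerm, smul_eq_mul, map_add, map_sub, map_mul, map_zero] at huv ⊢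
  linear_combination huv

lemma affine_mem_span_iff {a b c : A} :
    biaffine a b c 0 ∈ Ideal.span {sqOuter p, sqInner q, crossTerm s} ↔
      ∃ d d₁ d₂ : A, a = (p * q - s ^ 2) * d ∧ b = s * d₁ + q * d₂ ∧ c = -(p * d₁ + s * d₂) := by
  constructor
  · intro h
    obtain ⟨u, v, w, huvw⟩ := Submodule.mem_span_triple.mp h
    simp only [smul_eq_mul] at huvw
    obtain ⟨d, d₁, d₂, -, h⟩ := exists_eq_of_biaffine_sub_crossTerm_mul_mem_span (w := w) <|
      Ideal.mem_span_pair.mpr ⟨u, v, show u * sqOuter p + v * sqInner q = _ - crossTerm s * w by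
        rw [← huvw]; ring⟩
    exact ⟨d, d₁, d₂, h⟩
  · rintro ⟨d, d₁, d₂, rfl, rfl, rfl⟩
    -- `pq - s² = qP - x²Q + (xy - s)S`, `sx - py = xS - yP` and `qx - sy = xQ - yS`.
    let x : A[X][Y] := Y
    let y : A[X][Y] := Polynomial.C Polynomial.X
    refine Submodule.mem_span_triple.mpr ⟨CC q * CC d - y * CC d₁, x * CC d₂ - x ^ 2 * CC d,
      (x * y - CC s) * CC d + x * CC d₁ - y * CC d₂, ?_⟩
    simp only [sqOuter, sqInner, crossTerm, biaffine, smul_eq_mul, map_add, map_sub, map_mul,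
      map_neg, map_pow, map_zero, x, y]
    ring

lemma isWeaklyRegular_sqOuter_sqInner_crossTerm (h : p * q - s ^ 2 ∈ nonZeroDivisors A) :
    IsWeaklyRegular A[X][Y] [sqOuter p, sqInner q, crossTerm s] := by
  refine (isWeaklyRegular_triple_iff _ _ _).mpr ⟨?_, fun v => ?_, fun w hw => ?_⟩
  · exact (monic_sq_add_C (Polynomial.C p)).isRegular.left.isSMulRegular
  · exact mem_span_sq_add_C_of_C_mul_mem (monic_sq_add_C q).mem_nonZeroDivisors
  · obtain ⟨d, d₁, d₂, hmem, hd, h₁, h₂⟩ := exists_eq_of_biaffine_sub_crossTerm_mul_mem_span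
      (p := p) (q := q) (s := s) (a := 0) (b := 0) (c := 0) (w := w) <| by
        simpa [biaffine] using hw
    have hd₁ : (p * q - s ^ 2) * d₁ = 0 := by linear_combination s * h₁ + q * h₂
    have hd₂ : (p * q - s ^ 2) * d₂ = 0 := by linear_combination -p * h₁ - s * h₂
    rw [eq_comm, mul_left_mem_nonZeroDivisors_eq_zero_iff h] at hd
    rw [mul_left_mem_nonZeroDivisors_eq_zero_iff h] at hd₁ hd₂
    simpa [biaffine, hd, hd₁, hd₂] using hmem

end Bivariate

section Transport

variable {A R : Type*} [CommRing A] [CommRing R] [Algebra A R] {p q s : A} {x y : R}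

/-- The ideal generated by `x² + p`, `y² + q` and `xy + s` in an `A`-algebra `R`, to be used when
`R` is the polynomial ring over `A` in `x` and `y`. -/
def quadricIdeal (p q s : A) (x y : R) : Ideal R :=
  Ideal.span {x ^ 2 + algebraMap A R p, y ^ 2 + algebraMap A R q, x * y + algebraMap A R s}

lemma aevalAeval_biaffine (a b c : A) : Polynomial.aevalAeval y x (biaffine a b c 0) =
    algebraMap A R a + (x * algebraMap A R b + y * algebraMap A R c) := by
  simp only [biaffine, map_add, map_mul, map_zero, zero_mul, add_zero,
    Polynomial.aevalAevalEquiv_apply_apply, Polynomial.aeval_C, Polynomial.algebraMap_def,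
    Polynomial.coe_mapRingHom, Polynomial.map_C, Polynomial.map_X, Polynomial.aeval_X,
    Polynomial.eval_C, Polynomial.eval_X]
  ring

lemma aevalAeval_sqOuter : Polynomial.aevalAeval y x (sqOuter p) = x ^ 2 + algebraMap A R p := by
  simp [sqOuter]

lemma aevalAeval_sqInner : Polynomial.aevalAeval y x (sqInner q) = y ^ 2 + algebraMap A R q := by
  simp [sqInner]

lemma aevalAeval_crossTerm :
    Polynomial.aevalAeval y x (crossTerm s) = x * y + algebraMap A R s := by
  simp [crossTerm]

lemma aevalAeval_mem_quadricIdeal_iff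
    (h : Function.Bijective (Polynomial.aevalAeval (R := A) y x)) {f : A[X][Y]} :
    Polynomial.aevalAeval y x f ∈ quadricIdeal p q s x y ↔
      f ∈ Ideal.span {sqOuter p, sqInner q, crossTerm s} := by
  have hmap : quadricIdeal p q s x y =
      (Ideal.span {sqOuter p, sqInner q, crossTerm s}).map (Polynomial.aevalAeval y x) := by
    simp only [Ideal.map_span, Set.image_insert_eq, Set.image_singleton, aevalAeval_sqOuter,
      aevalAeval_sqInner, aevalAeval_crossTerm, quadricIdeal]
  rw [hmap, ← Ideal.mem_comap, Ideal.comap_map_of_bijective _ h]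

lemma exists_sub_linear_mem_quadricIdeal
    (h : Function.Bijective (Polynomial.aevalAeval (R := A) y x)) (p q s : A) (f : R) :
    ∃ a b c : A, f - (algebraMap A R a + (x * algebraMap A R b + y * algebraMap A R c)) ∈
      quadricIdeal p q s x y := by
  obtain ⟨f, rfl⟩ := h.surjective f
  obtain ⟨a, b, c, hf⟩ := exists_sub_affine_mem_span p q s f
  refine ⟨a, b, c, ?_⟩
  rwa [← aevalAeval_biaffine, ← map_sub, aevalAeval_mem_quadricIdeal_iff h]

lemma linear_mem_quadricIdeal_iff
    (h : Function.Bijective (Polynomial.aevalAeval (R := A) y x)) {a b c : A} :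
    algebraMap A R a + (x * algebraMap A R b + y * algebraMap A R c) ∈ quadricIdeal p q s x y ↔
      ∃ d d₁ d₂ : A, a = (p * q - s ^ 2) * d ∧ b = s * d₁ + q * d₂ ∧ c = -(p * d₁ + s * d₂) := by
  rw [← aevalAeval_biaffine, aevalAeval_mem_quadricIdeal_iff h, affine_mem_span_iff]

lemma isWeaklyRegular_of_aevalAeval_bijective
    (h : Function.Bijective (Polynomial.aevalAeval (R := A) y x))
    (hpqs : p * q - s ^ 2 ∈ nonZeroDivisors A) :
    IsWeaklyRegular R
      [x ^ 2 + algebraMap A R p, y ^ 2 + algebraMap A R q, x * y + algebraMap A R s] := by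
  rw [← aevalAeval_sqOuter (y := y), ← aevalAeval_sqInner (x := x), ← aevalAeval_crossTerm]
  refine (AddEquiv.isWeaklyRegular_congr (e := (AlgEquiv.ofBijective _ h).toAddEquiv) ?_).mp
    (isWeaklyRegular_sqOuter_sqInner_crossTerm hpqs)
  simp

end Transport

section PolynomialRing

variable {σ : Type*} {k : Type*} [CommRing k] {i j : σ}

/-- The subalgebra of polynomials in the variables other than `i` and `j`. -/
abbrev awayFrom (k : Type*) [CommRing k] (i j : σ) : Subalgebra k (MvPolynomial σ k) :=
  supported k {v | v ≠ i ∧ v ≠ j}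

lemma aevalAeval_awayFrom_injective (hij : i ≠ j) : Function.Injective
    (Polynomial.aevalAeval (R := awayFrom k i j) (X j : MvPolynomial σ k) (X i)) := by
  have hdisj : Disjoint {v | v ≠ i ∧ v ≠ j} {i, j} := by
    simp +contextual [Set.disjoint_left]
  have hind : AlgebraicIndependent (awayFrom k i j)
      fun v : ({i, j} : Set σ) => (X v.1 : MvPolynomial σ k) :=
    (algebraicIndependent_X σ k).adjoin_of_disjoint hdisj
  let v : Fin 2 → ({i, j} : Set σ) := ![⟨j, by simp⟩, ⟨i, by simp⟩]
  have hv : Function.Injective v := by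
    simp [v, Function.Injective, Fin.forall_fin_two, hij, hij.symm]
  have hcomp : Polynomial.aevalAeval (R := awayFrom k i j) (X j : MvPolynomial σ k) (X i) =
      (aeval fun n => X (v n).1).comp
        (Polynomial.Bivariate.equivMvPolynomial (awayFrom k i j)).toAlgHom := by
    ext <;> simp [v]
  rw [hcomp]
  have haeval : Function.Injective
      (aeval (R := awayFrom k i j) fun n => (X (v n).1 : MvPolynomial σ k)) :=
    hind.comp v hv
  exact haeval.comp (AlgEquiv.injective _)

lemma aevalAeval_awayFrom_surjective (i j : σ) : Function.Surjective
    (Polynomial.aevalAeval (R := awayFrom k i j) (X j : MvPolynomial σ k) (X i)) := by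
  set φ := Polynomial.aevalAeval (R := awayFrom k i j) (X j : MvPolynomial σ k) (X i)
  have hX (v : σ) : X v ∈ φ.range := by
    by_cases hi : v = i
    · exact ⟨Y, by simp [φ, hi]⟩
    by_cases hj : v = j
    · exact ⟨Polynomial.C Polynomial.X, by simp [φ, hj]⟩
    exact ⟨CC ⟨X v, Algebra.subset_adjoin ⟨v, ⟨hi, hj⟩, rfl⟩⟩, by simp [φ]⟩
  have hadj : Algebra.adjoin k (Set.range X) ≤ φ.range.restrictScalars k :=
    Algebra.adjoin_le (by rintro _ ⟨v, rfl⟩; exact hX v)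
  rw [adjoin_range_X] at hadj
  exact fun f => hadj (Algebra.mem_top (x := f))

lemma aevalAeval_awayFrom_bijective (hij : i ≠ j) : Function.Bijective
    (Polynomial.aevalAeval (R := awayFrom k i j) (X j : MvPolynomial σ k) (X i)) :=
  ⟨aevalAeval_awayFrom_injective hij, aevalAeval_awayFrom_surjective i j⟩

end PolynomialRing

section Ghosts

variable {N : ℕ} (z : Fin N)

/-- The polynomials in the ghosts `ψᵢ`, `χᵢ` with `i ≠ z`. -/
abbrev ghostsAway : Subalgebra ℂ (R3 N) := awayFrom ℂ (Sum.inl z) (Sum.inr z)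

variable {z} in
lemma ψ_mem_ghostsAway {i : Fin N} (h : i ≠ z) : ψ i ∈ ghostsAway z :=
  X_mem_supported.mpr ⟨by simpa using h, by simp⟩

variable {z} in
lemma χ_mem_ghostsAway {i : Fin N} (h : i ≠ z) : χ i ∈ ghostsAway z :=
  X_mem_supported.mpr ⟨by simp, by simpa using h⟩

/-- `P` with the summand of index `z` removed. -/
def PPAway : ghostsAway z :=
  ⟨∑ i ∈ Finset.univ.erase z, ψ i ^ 2,
    sum_mem fun _ hi => pow_mem (ψ_mem_ghostsAway (Finset.ne_of_mem_erase hi)) 2⟩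

/-- `Q` with the summand of index `z` removed. -/
def QQAway : ghostsAway z :=
  ⟨∑ i ∈ Finset.univ.erase z, χ i ^ 2,
    sum_mem fun _ hi => pow_mem (χ_mem_ghostsAway (Finset.ne_of_mem_erase hi)) 2⟩

/-- `S` with the summand of index `z` removed. -/
def SSAway : ghostsAway z :=
  ⟨∑ i ∈ Finset.univ.erase z, ψ i * χ i,
    sum_mem fun _ hi => mul_mem (ψ_mem_ghostsAway (Finset.ne_of_mem_erase hi))
      (χ_mem_ghostsAway (Finset.ne_of_mem_erase hi))⟩

/-- The Gram determinant `pq - s²` of the vectors `(ψᵢ)` and `(χᵢ)`, `i ≠ z`, for the standard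
bilinear form. -/
def gramAway : ghostsAway z := PPAway z * QQAway z - SSAway z ^ 2

lemma coe_gramAway : (gramAway z : R3 N) = C (1 / 2 : ℂ) *
    ∑ i ∈ Finset.univ.erase z, ∑ j ∈ Finset.univ.erase z, xidot i j ^ 2 := by
  have hsq (i j : Fin N) : (xidot i j : R3 N) ^ 2 =
      ψ i ^ 2 * χ j ^ 2 + χ i ^ 2 * ψ j ^ 2 - 2 * (ψ i * χ i * (ψ j * χ j)) := by
    unfold xidot; ring
  have htwo : (C (1 / 2 : ℂ) : R3 N) * 2 = 1 := by
    rw [← map_ofNat C 2, ← C_mul]; norm_num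
  simp only [hsq, Finset.sum_sub_distrib, Finset.sum_add_distrib, ← Finset.mul_sum,
    ← Finset.sum_mul]
  change (PPAway z : R3 N) * (QQAway z : R3 N) - (SSAway z : R3 N) ^ 2 = C (1 / 2 : ℂ) *
    ((PPAway z : R3 N) * (QQAway z : R3 N) + (QQAway z : R3 N) * (PPAway z : R3 N) -
      2 * ((SSAway z : R3 N) * (SSAway z : R3 N)))
  linear_combination -((PPAway z : R3 N) * (QQAway z : R3 N) - (SSAway z : R3 N) ^ 2) * htwo

lemma sum_xidot_mul (e₁ e₂ : R3 N) :
    ∑ i ∈ Finset.univ.erase z, xidot z i * (ψ i * e₁ + χ i * e₂) =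
      ψ z * (SSAway z * e₁ + QQAway z * e₂) - χ z * (PPAway z * e₁ + SSAway z * e₂) := by
  simp only [PPAway, QQAway, SSAway, Finset.sum_mul, Finset.mul_sum, ← Finset.sum_add_distrib,
    ← Finset.sum_sub_distrib]
  exact Finset.sum_congr rfl fun i _ => by unfold xidot; ring

variable {z} in
lemma gramAway_ne_zero {k l : Fin N} (hk : k ≠ z) (hl : l ≠ z) (hkl : k ≠ l) :
    gramAway z ≠ 0 := by
  intro h
  -- At `ψₖ = χₗ = 1`, all other ghosts zero, the determinant is `1 · 1 - 0²`.
  have heval := congrArg (fun f : ghostsAway z =>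
    eval (Sum.elim (Pi.single k 1) (Pi.single l 1)) (f : R3 N)) h
  simp [gramAway, PPAway, QQAway, SSAway, ψ, χ, Pi.single_apply, hk.symm, hl.symm, hkl.symm,
    ite_pow] at heval

lemma PP_eq : PP N = ψ z ^ 2 + (PPAway z : R3 N) :=
  (Finset.add_sum_erase _ (fun i => ψ i ^ 2) (Finset.mem_univ z)).symm

lemma QQ_eq : QQ N = χ z ^ 2 + (QQAway z : R3 N) :=
  (Finset.add_sum_erase _ (fun i => χ i ^ 2) (Finset.mem_univ z)).symm

lemma SS_eq : SS N = ψ z * χ z + (SSAway z : R3 N) :=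
  (Finset.add_sum_erase _ (fun i => ψ i * χ i) (Finset.mem_univ z)).symm

/-- The ideal `(P, Q, S)`, which consists of the boundaries of form degree `0`. -/
def ghostIdeal (N : ℕ) : Ideal (R3 N) := Ideal.span {PP N, QQ N, SS N}

lemma ghostIdeal_eq_quadricIdeal : ghostIdeal N =
    quadricIdeal (PPAway z) (QQAway z) (SSAway z) (ψ z) (χ z) := by
  rw [ghostIdeal, PP_eq z, QQ_eq z, SS_eq z]
  rfl

lemma aevalAeval_ghosts_bijective :
    Function.Bijective (Polynomial.aevalAeval (R := ghostsAway z) (χ z) (ψ z)) :=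
  aevalAeval_awayFrom_bijective Sum.inl_ne_inr

lemma exists_sub_linear_mem_ghostIdeal (f : R3 N) : ∃ a b c : ghostsAway z,
    f - (a + (ψ z * b + χ z * c)) ∈ ghostIdeal N := by
  rw [ghostIdeal_eq_quadricIdeal z]
  exact exists_sub_linear_mem_quadricIdeal (aevalAeval_ghosts_bijective z) _ _ _ f

variable {z} in
lemma linear_mem_ghostIdeal_iff {a b c : ghostsAway z} :
    (a + (ψ z * b + χ z * c) : R3 N) ∈ ghostIdeal N ↔ ∃ d e₁ e₂ : ghostsAway z,
      a = gramAway z * d ∧ (ψ z * b + χ z * c : R3 N) =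
        ∑ i ∈ Finset.univ.erase z, xidot z i * (ψ i * e₁ + χ i * e₂) := by
  have hiff {a b c : ghostsAway z} : (a + (ψ z * b + χ z * c) : R3 N) ∈ ghostIdeal N ↔
      ∃ d e₁ e₂ : ghostsAway z, a = gramAway z * d ∧
        b = SSAway z * e₁ + QQAway z * e₂ ∧ c = -(PPAway z * e₁ + SSAway z * e₂) := by
    rw [ghostIdeal_eq_quadricIdeal z]
    exact linear_mem_quadricIdeal_iff (aevalAeval_ghosts_bijective z)
  simp only [sum_xidot_mul]
  constructor
  · intro h
    obtain ⟨d, e₁, e₂, rfl, rfl, rfl⟩ := hiff.mp h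
    exact ⟨d, e₁, e₂, rfl, by push_cast; ring⟩
  · rintro ⟨d, e₁, e₂, rfl, h⟩
    rw [h]
    convert hiff.mpr ⟨d, e₁, e₂, rfl, rfl, rfl⟩ using 1
    push_cast [gramAway]
    ring

variable {z} in
lemma isWeaklyRegular_PP_QQ_SS {k l : Fin N} (hk : k ≠ z) (hl : l ≠ z) (hkl : k ≠ l) :
    IsWeaklyRegular (R3 N) [PP N, QQ N, SS N] := by
  rw [PP_eq z, QQ_eq z, SS_eq z]
  have hreg := mem_nonZeroDivisors_of_ne_zero (gramAway_ne_zero hk hl hkl)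
  exact isWeaklyRegular_of_aevalAeval_bijective (p := PPAway z) (q := QQAway z) (s := SSAway z)
    (aevalAeval_ghosts_bijective z) hreg

end Ghosts

section Differential

variable {N : ℕ}

lemma d3_add (ω ω' : Om3 N) : d3 (ω + ω') = d3 ω + d3 ω' := by
  funext n
  fin_cases n <;> simp [d3] <;> ring

lemma d3_d3 (ω : Om3 N) : d3 (d3 ω) = 0 := by
  funext n
  fin_cases n <;> simp [d3] <;> ring

lemma d3_ofR3 (r : R3 N) : d3 (ofR3 r) = 0 := by
  funext n
  fin_cases n <;> simp [d3, ofR3]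

lemma ofR3_zero : ofR3 (0 : R3 N) = 0 := by
  funext n
  fin_cases n <;> rfl

lemma ofR3_sub (r r' : R3 N) : ofR3 r - ofR3 r' = ofR3 (r - r') := by
  funext n
  fin_cases n <;> simp [ofR3]

lemma Equiv3.trans {ω ω' ω'' : Om3 N} (h : Equiv3 ω ω') (h' : Equiv3 ω' ω'') :
    Equiv3 ω ω'' := by
  obtain ⟨ρ, hρ⟩ := h
  obtain ⟨ρ', hρ'⟩ := h'
  exact ⟨ρ + ρ', by rw [d3_add, ← hρ, ← hρ', sub_add_sub_cancel]⟩

lemma Equiv3.d3_eq_zero {ω : Om3 N} {r : R3 N} (h : Equiv3 ω (ofR3 r)) : d3 ω = 0 := by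
  obtain ⟨ρ, hρ⟩ := h
  rw [← sub_add_cancel ω (ofR3 r), hρ, d3_add, d3_d3, d3_ofR3, add_zero]

lemma equiv3_ofR3_iff {r r' : R3 N} :
    Equiv3 (ofR3 r) (ofR3 r') ↔ r - r' ∈ ghostIdeal N := by
  simp only [Equiv3, ofR3_sub, ghostIdeal, Submodule.mem_span_triple, smul_eq_mul]
  constructor
  · rintro ⟨ρ, hρ⟩
    have h := congrFun hρ 0
    simp only [ofR3, d3, Matrix.cons_val_zero] at h
    exact ⟨ρ 1, ρ 2, ρ 3, by rw [h]; ring⟩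
  · rintro ⟨u, v, w, huvw⟩
    refine ⟨![0, u, v, w, 0, 0, 0, 0], ?_⟩
    simp [ofR3, d3, ← huvw, mul_comm]

lemma equiv3_ofR3_of_d3_eq_zero (hreg : IsWeaklyRegular (R3 N) [PP N, QQ N, SS N])
    {ω : Om3 N} (hω : d3 ω = 0) : Equiv3 ω (ofR3 (ω 0)) := by
  obtain ⟨hP, hQ, -⟩ := (isWeaklyRegular_triple_iff _ _ _).mp hreg
  have h₀ : PP N * ω 1 + QQ N * ω 2 + SS N * ω 3 = 0 := congrFun hω 0
  have h₂ : PP N * ω 4 - SS N * ω 6 = 0 := congrFun hω 2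
  have h₃ : PP N * ω 5 + QQ N * ω 6 = 0 := congrFun hω 3
  have h₆ : PP N * ω 7 = 0 := congrFun hω 6
  -- Exactness of the Koszul complex in degrees one, two and three.
  obtain ⟨r, s, t, h1, h2, h3⟩ := exists_eq_of_isWeaklyRegular_of_add_eq_zero hreg h₀
  obtain ⟨w, h5, h6⟩ := exists_eq_of_mul_add_mul_eq_zero hP hQ h₃
  have h4 : ω 4 = -(SS N * w) := hP <| by
    simp only [smul_eq_mul]
    linear_combination h₂ + SS N * h6
  have h7 : ω 7 = 0 := hP <| by simpa using h₆
  refine ⟨![0, 0, 0, 0, r, s, t, -w], ?_⟩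
  funext n
  fin_cases n <;> simp [d3, ofR3, h1, h2, h3, h4, h5, h6, h7]

end Differential

section Spinors

variable {N : ℕ} {S : Matrix (Fin 2) (Fin 2) ℂ}

lemma exists_xi3_eq_ghosts (A : Subalgebra ℂ (R3 N)) (S : Matrix (Fin 2) (Fin 2) ℂ)
    (a₁ a₂ : A) :
    ∃ b₁ b₂ : A, ∀ i, xi3 S i 0 * (a₁ : R3 N) + xi3 S i 1 * (a₂ : R3 N) =
      ψ i * (b₁ : R3 N) + χ i * (b₂ : R3 N) := by
  refine ⟨S⁻¹ 0 0 • a₁ + S⁻¹ 0 1 • a₂,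
    (Complex.I * S⁻¹ 1 0) • a₁ + (Complex.I * S⁻¹ 1 1) • a₂, fun i => ?_⟩
  simp only [xi3, Subalgebra.coe_add, Subalgebra.coe_smul, smul_eq_C_mul]
  ring

lemma exists_ghosts_eq_xi3 (A : Subalgebra ℂ (R3 N)) (hS : IsUnit S.det) (b₁ b₂ : A) :
    ∃ a₁ a₂ : A, ∀ i, ψ i * (b₁ : R3 N) + χ i * (b₂ : R3 N) =
      xi3 S i 0 * (a₁ : R3 N) + xi3 S i 1 * (a₂ : R3 N) := by
  refine ⟨S 0 0 • b₁ - (Complex.I * S 0 1) • b₂, S 1 0 • b₁ - (Complex.I * S 1 1) • b₂,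
    fun i => ?_⟩
  have hI : (C Complex.I : R3 N) * C Complex.I = -1 := by
    rw [← C_mul, Complex.I_mul_I, C_neg, C_1]
  have hinv (α β : Fin 2) :
      (C (S⁻¹ α 0) : R3 N) * C (S 0 β) + C (S⁻¹ α 1) * C (S 1 β) = C ((1 : Matrix _ _ ℂ) α β) := by
    rw [← Matrix.nonsing_inv_mul S hS, Matrix.mul_apply, Fin.sum_univ_two]
    simp only [C_add, C_mul]
  have h₀₀ := hinv 0 0
  have h₀₁ := hinv 0 1
  have h₁₀ := hinv 1 0
  have h₁₁ := hinv 1 1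
  simp only [Matrix.one_apply, Fin.isValue, zero_ne_one, one_ne_zero, if_true, if_false, C_0,
    C_1] at h₀₀ h₀₁ h₁₀ h₁₁
  simp only [xi3, Subalgebra.coe_sub, Subalgebra.coe_smul, smul_eq_C_mul, C_mul]
  linear_combination -(ψ i * (b₁ : R3 N)) * h₀₀ + C Complex.I * ψ i * (b₂ : R3 N) * h₀₁
    - C Complex.I * χ i * (b₁ : R3 N) * h₁₀
    + C Complex.I * C Complex.I * χ i * (b₂ : R3 N) * h₁₁ + χ i * (b₂ : R3 N) * hI

end Spinors

section Cohomology

lemma coefRing3_eq_ghostsAway {N : ℕ} (hN : 0 < N) : coefRing3 N hN = ghostsAway ⟨0, hN⟩ :=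
  rfl

variable {N : ℕ} {z k l : Fin N} {S : Matrix (Fin 2) (Fin 2) ℂ}

theorem d3_eq_zero_iff_exists_equiv3 (hk : k ≠ z) (hl : l ≠ z) (hkl : k ≠ l)
    (hS : IsUnit S.det) {ω : Om3 N} : d3 ω = 0 ↔ ∃ a a₁ a₂ : ghostsAway z,
      Equiv3 ω (ofR3 ((a : R3 N) + (xi3 S z 0 * (a₁ : R3 N) + xi3 S z 1 * (a₂ : R3 N)))) := by
  refine ⟨fun hω => ?_, fun ⟨_, _, _, h⟩ => h.d3_eq_zero⟩
  have hreg := isWeaklyRegular_PP_QQ_SS hk hl hkl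
  obtain ⟨a, b₁, b₂, hmem⟩ := exists_sub_linear_mem_ghostIdeal z (ω 0)
  obtain ⟨a₁, a₂, hspin⟩ := exists_ghosts_eq_xi3 (ghostsAway z) hS b₁ b₂
  refine ⟨a, a₁, a₂, (equiv3_ofR3_of_d3_eq_zero hreg hω).trans (equiv3_ofR3_iff.mpr ?_)⟩
  rwa [← hspin]

theorem equiv3_ofR3_add_xi3_zero_iff (hS : IsUnit S.det) (a a₁ a₂ : ghostsAway z) :
    Equiv3 (ofR3 ((a : R3 N) + (xi3 S z 0 * (a₁ : R3 N) + xi3 S z 1 * (a₂ : R3 N)))) 0 ↔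
      ∃ d d₁ d₂ : ghostsAway z, a = gramAway z * d ∧
        xi3 S z 0 * (a₁ : R3 N) + xi3 S z 1 * (a₂ : R3 N) =
          ∑ i ∈ Finset.univ.erase z,
            xidot z i * (xi3 S i 0 * (d₁ : R3 N) + xi3 S i 1 * (d₂ : R3 N)) := by
  obtain ⟨b₁, b₂, hb⟩ := exists_xi3_eq_ghosts (ghostsAway z) S a₁ a₂
  rw [← ofR3_zero, equiv3_ofR3_iff, sub_zero, hb, linear_mem_ghostIdeal_iff]
  constructor
  · rintro ⟨d, e₁, e₂, ha, hsum⟩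
    obtain ⟨d₁, d₂, hd⟩ := exists_ghosts_eq_xi3 (ghostsAway z) hS e₁ e₂
    exact ⟨d, d₁, d₂, ha, by simpa only [hd] using hsum⟩
  · rintro ⟨d, d₁, d₂, ha, hsum⟩
    obtain ⟨e₁, e₂, he⟩ := exists_xi3_eq_ghosts (ghostsAway z) S d₁ d₂
    exact ⟨d, e₁, e₂, ha, by simpa only [he] using hsum⟩

end Cohomology

/-- for `N ≥ 3` and any invertible `S` (equivalent spinor
representation), (i) `dω = 0` iff `ω ∼ a + Σ_α ξ₁^α a_α` with coefficients in
`ℂ[ψ₂,…,ψ_N, χ₂,…,χ_N]`; (ii) such a combination is `∼ 0` iff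
`a = ½ Σ_{i,j≥2} (ξᵢ·ξⱼ)² d` and `Σ_α ξ₁^α a_α = Σ_{i≥2} (ξ₁·ξᵢ)(ξᵢ¹d₁ + ξᵢ²d₂)`
for some `d, d₁, d₂ ∈ ℂ[ψ₂,…,ψ_N, χ₂,…,χ_N]`. -/
theorem stmt11 (N : ℕ) (hN : 3 ≤ N)
    (S : Matrix (Fin 2) (Fin 2) ℂ) (hS : IsUnit S.det) :
    (∀ ω : Om3 N, d3 ω = 0 ↔
      ∃ a ∈ coefRing3 N (by omega), ∃ a1 ∈ coefRing3 N (by omega),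
      ∃ a2 ∈ coefRing3 N (by omega),
        Equiv3 ω (ofR3 (a + xi3 S ⟨0, by omega⟩ 0 * a1 + xi3 S ⟨0, by omega⟩ 1 * a2)))
    ∧
    (∀ a a1 a2 : R3 N,
      a ∈ coefRing3 N (by omega) → a1 ∈ coefRing3 N (by omega) →
      a2 ∈ coefRing3 N (by omega) →
      (Equiv3 (ofR3 (a + xi3 S ⟨0, by omega⟩ 0 * a1 + xi3 S ⟨0, by omega⟩ 1 * a2)) 0 ↔
        ∃ d ∈ coefRing3 N (by omega), ∃ d1 ∈ coefRing3 N (by omega),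
        ∃ d2 ∈ coefRing3 N (by omega),
          a = C (1/2 : ℂ)
              * (∑ i ∈ Finset.univ.erase (⟨0, by omega⟩ : Fin N),
                 ∑ j ∈ Finset.univ.erase (⟨0, by omega⟩ : Fin N),
                   xidot i j ^ 2) * d
          ∧ xi3 S (⟨0, by omega⟩ : Fin N) 0 * a1 + xi3 S (⟨0, by omega⟩ : Fin N) 1 * a2
            = ∑ i ∈ Finset.univ.erase (⟨0, by omega⟩ : Fin N),
                xidot ⟨0, by omega⟩ i * (xi3 S i 0 * d1 + xi3 S i 1 * d2))) := by
  have hk : (⟨1, by omega⟩ : Fin N) ≠ ⟨0, by omega⟩ := by simp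
  have hl : (⟨2, by omega⟩ : Fin N) ≠ ⟨0, by omega⟩ := by simp
  have hkl : (⟨1, by omega⟩ : Fin N) ≠ ⟨2, by omega⟩ := by simp
  simp only [coefRing3_eq_ghostsAway]
  constructor
  · intro ω
    simpa only [Subtype.exists, exists_prop, add_assoc] using
      d3_eq_zero_iff_exists_equiv3 hk hl hkl hS
  · intro a a1 a2 ha ha1 ha2
    simpa only [Subtype.exists, exists_prop, add_assoc, Subtype.ext_iff, Subalgebra.coe_mul,
      coe_gramAway] using equiv3_ofR3_add_xi3_zero_iff hS ⟨a, ha⟩ ⟨a1, ha1⟩ ⟨a2, ha2⟩
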